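/- arXiv:math/0102035 — 7 statements merged into one kernel-verified Lean document; each statement's English description precedes it below -/
import Mathlib

section
/- Let θ₁, θ₂, θ₃ ∈ [0, π] be real numbers such that cos²θ₁ + cos²θ₂ + cos²θ₃ + 2·cosθ₁·cosθ₂·cosθ₃ ≤ 1. Then θ₁ + θ₂ + θ₃ ≥ π. -/
theorem angle_sum_ge_pi (θ₁ θ₂ θ₃ : ℝ)
    (h₁ : θ₁ ∈ Set.Icc 0 Real.pi) (h₂ : θ₂ ∈ Set.Icc 0 Real.pi)
    (h₃ : θ₃ ∈ Set.Icc 0 Real.pi)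
    (h : Real.cos θ₁ ^ 2 + Real.cos θ₂ ^ 2 + Real.cos θ₃ ^ 2 +
      2 * Real.cos θ₁ * Real.cos θ₂ * Real.cos θ₃ ≤ 1) :
    θ₁ + θ₂ + θ₃ ≥ Real.pi := by
  by_contra hlt
  rw [ge_iff_le, not_le] at hlt
  obtain ⟨a0, a1⟩ := h₁
  obtain ⟨b0, b1⟩ := h₂
  obtain ⟨c0, c1⟩ := h₃
  have key : ∀ x : ℝ, 0 ≤ x → θ₃ + x < Real.pi → 0 < Real.cos θ₃ + Real.cos x := by
    intro x hx hlt'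
    have := Real.cos_lt_cos_of_nonneg_of_le_pi c0 (by linarith : Real.pi - x ≤ Real.pi)
      (by linarith)
    rw [Real.cos_pi_sub] at this
    linarith
  have e1 := key (θ₁ + θ₂) (by linarith) (by linarith)
  have e2 := key |θ₁ - θ₂| (abs_nonneg _) (by
    rcases abs_cases (θ₁ - θ₂) with ⟨h, _⟩ | ⟨h, _⟩ <;> rw [h] <;> linarith)
  rw [Real.cos_abs, Real.cos_sub] at e2
  rw [Real.cos_add] at e1
  have hp := mul_pos e1 e2
  have s1 : Real.sin θ₁ ^ 2 = 1 - Real.cos θ₁ ^ 2 := Real.sin_sq θ₁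
  have s2 : Real.sin θ₂ ^ 2 = 1 - Real.cos θ₂ ^ 2 := Real.sin_sq θ₂
  have s3 : (Real.sin θ₁ * Real.sin θ₂) ^ 2
      = (1 - Real.cos θ₁ ^ 2) * (1 - Real.cos θ₂ ^ 2) := by
    rw [mul_pow, s1, s2]
  linarith [hp, s3, h]
end

section
/- Let θ₁, θ₂, θ₃ ∈ [0, π] be real numbers such that cos²θ₁ + cos²θ₂ + cos²θ₃ + 2·cosθ₁·cosθ₂·cosθ₃ ≤ 1. Then θ₂ − θ₁ ≤ π − θ₃. -/
theorem angle_diff_le (θ₁ θ₂ θ₃ : ℝ)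
    (h₁ : θ₁ ∈ Set.Icc 0 Real.pi) (h₂ : θ₂ ∈ Set.Icc 0 Real.pi)
    (h₃ : θ₃ ∈ Set.Icc 0 Real.pi)
    (h : Real.cos θ₁ ^ 2 + Real.cos θ₂ ^ 2 + Real.cos θ₃ ^ 2 +
      2 * Real.cos θ₁ * Real.cos θ₂ * Real.cos θ₃ ≤ 1) :
    θ₂ - θ₁ ≤ Real.pi - θ₃ := by
  have s1 := Real.sin_nonneg_of_mem_Icc h₁
  have s2 := Real.sin_nonneg_of_mem_Icc h₂
  obtain ⟨a1, b1⟩ := h₁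
  obtain ⟨a2, b2⟩ := h₂
  obtain ⟨a3, b3⟩ := h₃
  by_contra! hc
  have key := Real.cos_lt_cos_of_nonneg_of_le_pi (by linarith : 0 ≤ Real.pi - θ₃)
    (by linarith : θ₂ - θ₁ ≤ Real.pi) hc
  rw [Real.cos_pi_sub, Real.cos_sub] at key
  have hsq : (Real.cos θ₃ + Real.cos θ₁ * Real.cos θ₂) ^ 2
      ≤ (Real.sin θ₁ * Real.sin θ₂) ^ 2 := by
    rw [mul_pow (Real.sin θ₁), Real.sin_sq, Real.sin_sq]
    linarith
  have := (abs_le_of_sq_le_sq' hsq (mul_nonneg s1 s2)).1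
  linarith
end

section
/- Let θ₁, θ₂, θ₃ ∈ [0, π] be real numbers with θ₁ + θ₂ + θ₃ < π. Then cos²θ₁ + cos²θ₂ + cos²θ₃ + 2·cosθ₁·cosθ₂·cosθ₃ > 1. -/
theorem cos_sum_gt_one (θ₁ θ₂ θ₃ : ℝ)
    (h₁ : θ₁ ∈ Set.Icc 0 Real.pi) (h₂ : θ₂ ∈ Set.Icc 0 Real.pi)
    (h₃ : θ₃ ∈ Set.Icc 0 Real.pi)
    (h : θ₁ + θ₂ + θ₃ < Real.pi) :
    Real.cos θ₁ ^ 2 + Real.cos θ₂ ^ 2 + Real.cos θ₃ ^ 2 +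
      2 * Real.cos θ₁ * Real.cos θ₂ * Real.cos θ₃ > 1 := by
  obtain ⟨a1, b1⟩ := h₁
  obtain ⟨a2, b2⟩ := h₂
  obtain ⟨a3, b3⟩ := h₃
  have key : ∀ x : ℝ, 0 ≤ x → x < Real.pi - θ₃ → 0 < Real.cos θ₃ + Real.cos x := by
    intro x hx hx'
    have := Real.cos_lt_cos_of_nonneg_of_le_pi hx (by linarith) hx'
    rw [Real.cos_pi_sub] at this
    linarith
  have k1 := key (θ₁ + θ₂) (by linarith) (by linarith)
  have k2 := key |θ₁ - θ₂| (abs_nonneg _) (abs_lt.mpr ⟨by linarith, by linarith⟩)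
  rw [Real.cos_abs, Real.cos_sub] at k2
  rw [Real.cos_add] at k1
  have k := mul_pos k1 k2
  have e : (Real.sin θ₁ * Real.sin θ₂) ^ 2
      = (1 - Real.cos θ₁ ^ 2) * (1 - Real.cos θ₂ ^ 2) := by
    rw [mul_pow, Real.sin_sq, Real.sin_sq]
  nlinarith [k, e]
end

section
/- Let a₁, a₂, a₃ be matrices in SU(2) with a₁·a₂·a₃ = id. Then cos²(θ(a₁)/2) + cos²(θ(a₂)/2) + cos²(θ(a₃)/2) + 2·cos(θ(a₁)/2)·cos(θ(a₂)/2)·cos(θ(a₃)/2) ≤ 1. Equivalently, writing tⱼ := Re(tr aⱼ), one has t₁² + t₂² + t₃² − t₁·t₂·t₃ ≤ 4. -/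
/-- The rotation angle of a matrix in `SU(2)`: `θ(a) = 2 · arccos(−Re(tr a)/2)`. -/
noncomputable def rotationAngle (a : Matrix.specialUnitaryGroup (Fin 2) ℂ) : ℝ :=
  2 * Real.arccos (-(Matrix.trace (a : Matrix (Fin 2) (Fin 2) ℂ)).re / 2)

/-- Real coordinates of a matrix in `SU(2)`. -/
theorem su2_coords (a : Matrix.specialUnitaryGroup (Fin 2) ℂ) :
    ∃ x y z w : ℝ, x ^ 2 + y ^ 2 + z ^ 2 + w ^ 2 = 1 ∧
      (a : Matrix (Fin 2) (Fin 2) ℂ) = !![⟨x, y⟩, ⟨z, w⟩; ⟨-z, w⟩, ⟨x, -y⟩] := by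
  obtain ⟨A, hA⟩ := a
  obtain ⟨hu, hd⟩ := Matrix.mem_specialUnitaryGroup_iff.1 hA
  have h1 : star A * A = 1 := (Matrix.mem_unitaryGroup_iff').1 hu
  have h2 : star A = A.adjugate := by
    have h3 : A * A.adjugate = 1 := by rw [Matrix.mul_adjugate, hd, one_smul]
    calc star A = star A * (A * A.adjugate) := by rw [h3, mul_one]
      _ = A.adjugate := by rw [← mul_assoc, h1, one_mul]
  have e0 := congrFun (congrFun h2 0) 0
  have e1 := congrFun (congrFun h2 0) 1
  simp only [Matrix.star_apply, Matrix.adjugate_fin_two, Matrix.of_apply, Matrix.cons_val',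
    Matrix.cons_val_zero, Matrix.cons_val_one, Matrix.cons_val_fin_one] at e0 e1
  rw [Matrix.det_fin_two] at hd
  have r0 := congrArg Complex.re e0
  have i0 := congrArg Complex.im e0
  have r1 := congrArg Complex.re e1
  have i1 := congrArg Complex.im e1
  have rd := congrArg Complex.re hd
  simp at r0 i0 r1 i1 rd
  refine ⟨(A 0 0).re, (A 0 0).im, (A 0 1).re, (A 0 1).im, ?_, ?_⟩
  · rw [← r0, ← i0, r1, i1] at rd
    nlinarith
  · ext i j
    fin_cases i <;> fin_cases j <;> apply Complex.ext <;> simp <;> linarith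

theorem su2_cos (x : ℝ) (hx : x ^ 2 ≤ 1) : Real.cos (2 * Real.arccos (-(2 * x) / 2) / 2) = -x := by
  rw [mul_div_cancel_left₀ _ (two_ne_zero), Real.cos_arccos] <;> nlinarith

theorem su2_triple_product_inequality
    (a₁ a₂ a₃ : Matrix.specialUnitaryGroup (Fin 2) ℂ)
    (h : a₁ * a₂ * a₃ = 1) :
    Real.cos (rotationAngle a₁ / 2) ^ 2 + Real.cos (rotationAngle a₂ / 2) ^ 2 +
        Real.cos (rotationAngle a₃ / 2) ^ 2 +
        2 * Real.cos (rotationAngle a₁ / 2) * Real.cos (rotationAngle a₂ / 2) *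
          Real.cos (rotationAngle a₃ / 2) ≤ 1 ∧
    (Matrix.trace (a₁ : Matrix (Fin 2) (Fin 2) ℂ)).re ^ 2 +
        (Matrix.trace (a₂ : Matrix (Fin 2) (Fin 2) ℂ)).re ^ 2 +
        (Matrix.trace (a₃ : Matrix (Fin 2) (Fin 2) ℂ)).re ^ 2 -
        (Matrix.trace (a₁ : Matrix (Fin 2) (Fin 2) ℂ)).re *
          (Matrix.trace (a₂ : Matrix (Fin 2) (Fin 2) ℂ)).re *
          (Matrix.trace (a₃ : Matrix (Fin 2) (Fin 2) ℂ)).re ≤ 4 := by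
  obtain ⟨x, y, z, w, n1, h1⟩ := su2_coords a₁
  obtain ⟨p, q, r, s, n2, h2⟩ := su2_coords a₂
  obtain ⟨b, c, d, e, n3, h3⟩ := su2_coords a₃
  have t1 : (Matrix.trace (a₁ : Matrix (Fin 2) (Fin 2) ℂ)).re = 2 * x := by
    rw [h1, Matrix.trace_fin_two]; simp; ring
  have t2 : (Matrix.trace (a₂ : Matrix (Fin 2) (Fin 2) ℂ)).re = 2 * p := by
    rw [h2, Matrix.trace_fin_two]; simp; ring
  have t3 : (Matrix.trace (a₃ : Matrix (Fin 2) (Fin 2) ℂ)).re = 2 * b := by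
    rw [h3, Matrix.trace_fin_two]; simp; ring
  have hb : b = x * p - y * q - z * r - w * s := by
    have h4 : a₁ * a₂ = star a₃ := by
      exact eq_inv_of_mul_eq_one_left h
    have h5 := congrArg (fun m : Matrix.specialUnitaryGroup (Fin 2) ℂ =>
      ((m : Matrix (Fin 2) (Fin 2) ℂ) 0 0).re) h4
    simp [h1, h2, h3, Matrix.mul_apply, Fin.sum_univ_two] at h5
    linarith
  have key : x ^ 2 + p ^ 2 + b ^ 2 - 2 * x * p * b ≤ 1 := by
    have cs : (y * q + z * r + w * s) ^ 2 ≤ (y ^ 2 + z ^ 2 + w ^ 2) * (q ^ 2 + r ^ 2 + s ^ 2) := by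
      nlinarith [sq_nonneg (y * r - z * q), sq_nonneg (y * s - w * q), sq_nonneg (z * s - w * r)]
    have e1 : y ^ 2 + z ^ 2 + w ^ 2 = 1 - x ^ 2 := by linarith
    have e2 : q ^ 2 + r ^ 2 + s ^ 2 = 1 - p ^ 2 := by linarith
    have e3 : y * q + z * r + w * s = x * p - b := by linarith
    rw [e1, e2, e3] at cs
    nlinarith
  unfold rotationAngle
  rw [t1, t2, t3, su2_cos x (by nlinarith), su2_cos p (by nlinarith), su2_cos b (by nlinarith)]
  constructor <;> nlinarith
end

section
/- Let a₀, a₁, a₂, a₃ be four matrices in SU(2) satisfying a₁·a₂·a₃ = a₀. Then θ(a₁) + θ(a₂) + θ(a₃) ≥ θ(a₀). -/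
theorem su2_entries (M : Matrix (Fin 2) (Fin 2) ℂ)
    (hM : M ∈ Matrix.specialUnitaryGroup (Fin 2) ℂ) :
    (M 1 1).re = (M 0 0).re ∧ (M 1 1).im = -(M 0 0).im ∧
    (M 1 0).re = -(M 0 1).re ∧ (M 1 0).im = (M 0 1).im ∧
    (M 0 0).re ^ 2 + (M 0 0).im ^ 2 + (M 0 1).re ^ 2 + (M 0 1).im ^ 2 = 1 := by
  obtain ⟨hu, hd⟩ := Matrix.mem_specialUnitaryGroup_iff.1 hM
  have h1 : star M * M = 1 := (Unitary.mem_iff.1 hu).1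
  have h2 : star M = M.adjugate := by
    have h3 : M * M.adjugate = 1 := by rw [Matrix.mul_adjugate, hd, one_smul]
    calc star M = star M * (M * M.adjugate) := by rw [h3, mul_one]
      _ = M.adjugate := by rw [← mul_assoc, h1, one_mul]
  rw [Matrix.adjugate_fin_two] at h2
  have e0 := congrFun (congrFun h2 0) 0
  have e1 := congrFun (congrFun h2 0) 1
  simp [Matrix.star_apply, Complex.ext_iff] at e0 e1
  rw [Matrix.det_fin_two] at hd
  have hd' := congrArg Complex.re hd
  simp at hd'
  obtain ⟨e0, e0'⟩ := e0
  obtain ⟨e1, e1'⟩ := e1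
  refine ⟨e0.symm, by linarith, by linarith, by linarith, ?_⟩
  have k1 : (M 1 1).im = -(M 0 0).im := by linarith
  have k2 : (M 1 0).im = (M 0 1).im := by linarith
  rw [← e0, k1, e1, k2] at hd'
  linarith

theorem arccos_trace_mul_le (M N : Matrix (Fin 2) (Fin 2) ℂ)
    (hM : M ∈ Matrix.specialUnitaryGroup (Fin 2) ℂ)
    (hN : N ∈ Matrix.specialUnitaryGroup (Fin 2) ℂ) :
    Real.arccos ((M * N).trace.re / 2) ≤
      Real.arccos (M.trace.re / 2) + Real.arccos (N.trace.re / 2) := by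
  obtain ⟨a1, a2, a3, a4, a5⟩ := su2_entries M hM
  obtain ⟨b1, b2, b3, b4, b5⟩ := su2_entries N hN
  have t1 : M.trace.re / 2 = (M 0 0).re := by
    simp [Matrix.trace_fin_two, a1]
  have t2 : N.trace.re / 2 = (N 0 0).re := by
    simp [Matrix.trace_fin_two, b1]
  have t3 : (M * N).trace.re / 2 = (M 0 0).re * (N 0 0).re -
      ((M 0 0).im * (N 0 0).im + (M 0 1).re * (N 0 1).re + (M 0 1).im * (N 0 1).im) := by
    simp [Matrix.trace_fin_two, Matrix.mul_apply, Fin.sum_univ_two, a1, a2, a3, a4, b1, b2, b3, b4]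
    ring
  rw [t1, t2, t3]
  clear t1 t2 t3 a1 a2 a3 a4 b1 b2 b3 b4 hM hN
  generalize (M 0 0).re = p at *
  generalize (N 0 0).re = q at *
  generalize (M 0 0).im = x1 at *
  generalize (N 0 0).im = y1 at *
  generalize (M 0 1).re = x2 at *
  generalize (N 0 1).re = y2 at *
  generalize (M 0 1).im = x3 at *
  generalize (N 0 1).im = y3 at *
  rcases le_total Real.pi (Real.arccos p + Real.arccos q) with h | h
  · exact (Real.arccos_le_pi _).trans h
  have h0 : 0 ≤ Real.arccos p + Real.arccos q :=
    add_nonneg (Real.arccos_nonneg _) (Real.arccos_nonneg _)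
  rw [← Real.arccos_cos h0 h]
  apply Real.antitone_arccos
  rw [Real.cos_add, Real.sin_arccos, Real.sin_arccos,
    Real.cos_arccos (by nlinarith [sq_nonneg x1, sq_nonneg x2, sq_nonneg x3])
      (by nlinarith [sq_nonneg x1, sq_nonneg x2, sq_nonneg x3]),
    Real.cos_arccos (by nlinarith [sq_nonneg y1, sq_nonneg y2, sq_nonneg y3])
      (by nlinarith [sq_nonneg y1, sq_nonneg y2, sq_nonneg y3])]
  have e1 : 1 - p ^ 2 = x1 ^ 2 + x2 ^ 2 + x3 ^ 2 := by linarith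
  have e2 : 1 - q ^ 2 = y1 ^ 2 + y2 ^ 2 + y3 ^ 2 := by linarith
  rw [e1, e2, ← Real.sqrt_mul (by positivity)]
  apply sub_le_sub_left
  apply Real.le_sqrt_of_sq_le
  nlinarith [sq_nonneg (x1 * y2 - x2 * y1), sq_nonneg (x1 * y3 - x3 * y1),
    sq_nonneg (x2 * y3 - x3 * y2)]

theorem su2_neg_mem (M : Matrix (Fin 2) (Fin 2) ℂ)
    (hM : M ∈ Matrix.specialUnitaryGroup (Fin 2) ℂ) :
    -M ∈ Matrix.specialUnitaryGroup (Fin 2) ℂ := by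
  obtain ⟨hu, hd⟩ := Matrix.mem_specialUnitaryGroup_iff.1 hM
  refine Matrix.mem_specialUnitaryGroup_iff.2 ⟨?_, ?_⟩
  · rw [Matrix.mem_unitaryGroup_iff] at hu ⊢
    rw [star_neg, neg_mul_neg, hu]
  · rw [Matrix.det_neg, hd]; simp

theorem su2_rotation_angle_triangle_inequality
    (a₀ a₁ a₂ a₃ : Matrix.specialUnitaryGroup (Fin 2) ℂ)
    (h : a₁ * a₂ * a₃ = a₀) :
    rotationAngle a₁ + rotationAngle a₂ + rotationAngle a₃ ≥ rotationAngle a₀ := by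
  subst h
  have m1 := su2_neg_mem _ a₁.2
  have m2 := su2_neg_mem _ a₂.2
  have m3 := su2_neg_mem _ a₃.2
  have h1 := arccos_trace_mul_le _ _ m1 m2
  have h2 := arccos_trace_mul_le _ _ (mul_mem m1 m2) m3
  rw [neg_mul_neg, mul_neg, Matrix.trace_neg, Matrix.trace_neg, Complex.neg_re,
    Complex.neg_re] at h2
  rw [neg_mul_neg, Matrix.trace_neg, Matrix.trace_neg, Complex.neg_re,
    Complex.neg_re] at h1
  unfold rotationAngle
  simp only [Submonoid.coe_mul]
  linarith
end

section
/- Let m be a positive integer and let a₁, …, a_{2m+1} be matrices in SU(2) satisfying a₁·a₂·⋯·a_{2m+1} = id. Then θ(a₁) + θ(a₂) + ⋯ + θ(a_{2m+1}) ≥ 2π. In particular, for any odd number of matrices in SU(2) whose product is the identity, the sum of their rotation angles is at least 2π. -/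
theorem su2_aux_key (x₀ x₁ x₂ x₃ y₀ y₁ y₂ y₃ : ℝ)
    (hx : x₀^2 + x₁^2 + x₂^2 + x₃^2 = 1) (hy : y₀^2 + y₁^2 + y₂^2 + y₃^2 = 1) :
    Real.arccos (x₀*y₀ - x₁*y₁ - x₂*y₂ - x₃*y₃) ≤ Real.arccos x₀ + Real.arccos y₀ := by
  have hx1 : -1 ≤ x₀ := by nlinarith [sq_nonneg x₁, sq_nonneg x₂, sq_nonneg x₃]
  have hx2 : x₀ ≤ 1 := by nlinarith [sq_nonneg x₁, sq_nonneg x₂, sq_nonneg x₃]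
  have hy1 : -1 ≤ y₀ := by nlinarith [sq_nonneg y₁, sq_nonneg y₂, sq_nonneg y₃]
  have hy2 : y₀ ≤ 1 := by nlinarith [sq_nonneg y₁, sq_nonneg y₂, sq_nonneg y₃]
  rcases le_total (Real.arccos x₀ + Real.arccos y₀) Real.pi with hp | hp
  · have h0 : 0 ≤ Real.arccos x₀ + Real.arccos y₀ :=
      add_nonneg (Real.arccos_nonneg _) (Real.arccos_nonneg _)
    rw [← Real.arccos_cos h0 hp]
    apply Real.arccos_le_arccos
    rw [Real.cos_add, Real.cos_arccos hx1 hx2, Real.cos_arccos hy1 hy2, Real.sin_arccos,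
      Real.sin_arccos, ← Real.sqrt_mul (by nlinarith)]
    have : x₁*y₁ + x₂*y₂ + x₃*y₃ ≤ √((1 - x₀^2) * (1 - y₀^2)) := by
      apply Real.le_sqrt_of_sq_le
      have e1 : 1 - x₀^2 = x₁^2 + x₂^2 + x₃^2 := by linarith
      have e2 : 1 - y₀^2 = y₁^2 + y₂^2 + y₃^2 := by linarith
      rw [e1, e2]
      nlinarith [sq_nonneg (x₁*y₂ - x₂*y₁), sq_nonneg (x₁*y₃ - x₃*y₁), sq_nonneg (x₂*y₃ - x₃*y₂)]
    linarith
  · exact (Real.arccos_le_pi _).trans hp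

theorem su2_aux_coords (a : Matrix.specialUnitaryGroup (Fin 2) ℂ) :
    ∃ x₀ x₁ x₂ x₃ : ℝ, x₀^2 + x₁^2 + x₂^2 + x₃^2 = 1 ∧
      (a : Matrix (Fin 2) (Fin 2) ℂ) = !![⟨x₀, x₁⟩, ⟨x₂, x₃⟩; ⟨-x₂, x₃⟩, ⟨x₀, -x₁⟩] := by
  obtain ⟨A, hA⟩ := a
  obtain ⟨hu, hd⟩ := Matrix.mem_specialUnitaryGroup_iff.1 hA
  have h1 : star A * A = 1 := (Matrix.mem_unitaryGroup_iff').1 hu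
  have h2 : star A = A.adjugate := by
    calc star A = star A * (A * A.adjugate) := by rw [Matrix.mul_adjugate, hd]; simp
      _ = A.adjugate := by rw [← mul_assoc, h1, one_mul]
  rw [Matrix.adjugate_fin_two] at h2
  have e00 := congrFun (congrFun h2 0) 0
  have e10 := congrFun (congrFun h2 1) 0
  simp [Matrix.star_apply] at e00 e10
  rw [Matrix.det_fin_two] at hd
  have f1 := congrArg Complex.re e00
  have f2 := congrArg Complex.im e00
  have f3 := congrArg Complex.re e10
  have f4 := congrArg Complex.im e10
  have f5 := congrArg Complex.re hd
  simp at f1 f2 f3 f4 f5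
  refine ⟨(A 0 0).re, (A 0 0).im, (A 0 1).re, (A 0 1).im, ?_, ?_⟩
  · have g3 : (A 1 0).re = -(A 0 1).re := by linarith
    have g4 : (A 1 0).im = (A 0 1).im := by linarith
    rw [← f1, ← f2, g3, g4] at f5
    linarith
  · ext i j
    fin_cases i <;> fin_cases j <;> apply Complex.ext <;> simp <;> linarith

theorem su2_aux_step (a b : Matrix.specialUnitaryGroup (Fin 2) ℂ) (s : ℝ) (hs : s^2 = 1) :
    Real.arccos (-s * (Matrix.trace ((a * b : Matrix.specialUnitaryGroup (Fin 2) ℂ) :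
      Matrix (Fin 2) (Fin 2) ℂ)).re / 2) ≤
    Real.arccos (-(Matrix.trace (a : Matrix (Fin 2) (Fin 2) ℂ)).re / 2) +
    Real.arccos (s * (Matrix.trace (b : Matrix (Fin 2) (Fin 2) ℂ)).re / 2) := by
  obtain ⟨x₀, x₁, x₂, x₃, hx, ha⟩ := su2_aux_coords a
  obtain ⟨y₀, y₁, y₂, y₃, hy, hb⟩ := su2_aux_coords b
  have key := su2_aux_key (-x₀) (-x₁) (-x₂) (-x₃) (s*y₀) (s*y₁) (s*y₂) (s*y₃)
    (by linarith) (by simp only [mul_pow, hs]; linarith)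
  have e : ((a * b : Matrix.specialUnitaryGroup (Fin 2) ℂ) : Matrix (Fin 2) (Fin 2) ℂ)
    = (a : Matrix (Fin 2) (Fin 2) ℂ) * (b : Matrix (Fin 2) (Fin 2) ℂ) := rfl
  rw [e, ha, hb]
  convert key using 2
  · simp [Matrix.trace_fin_two]; ring
  · congr 1; simp [Matrix.trace_fin_two]
  · congr 1; simp [Matrix.trace_fin_two]; ring

theorem su2_aux_list (l : List (Matrix.specialUnitaryGroup (Fin 2) ℂ)) :
    2 * Real.arccos ((-1)^l.length * (Matrix.trace (l.prod : Matrix (Fin 2) (Fin 2) ℂ)).re / 2)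
      ≤ (l.map rotationAngle).sum := by
  induction l with
  | nil => simp [Matrix.trace_fin_two]
  | cons a l ih =>
    have := su2_aux_step a l.prod ((-1)^l.length) (by rw [← pow_mul, mul_comm, pow_mul]; simp)
    simp only [List.prod_cons, List.length_cons, List.map_cons, List.sum_cons, pow_succ,
      mul_neg_one]
    have h2 : rotationAngle a
      = 2 * Real.arccos (-(Matrix.trace (a : Matrix (Fin 2) (Fin 2) ℂ)).re / 2) := rfl
    linarith

theorem su2_odd_product_rotation_angles
    (m : ℕ) (hm : 0 < m)
    (a : Fin (2 * m + 1) → Matrix.specialUnitaryGroup (Fin 2) ℂ)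
    (h : (List.ofFn a).prod = 1) :
    2 * Real.pi ≤ ∑ j : Fin (2 * m + 1), rotationAngle (a j) := by
  have := su2_aux_list (List.ofFn a)
  rw [h, List.map_ofFn, List.sum_ofFn, List.length_ofFn] at this
  simpa [pow_succ, pow_mul, Matrix.trace_fin_two] using this
end

section
/- Let a(z) and b(z) be relatively prime polynomials with complex coefficients such that b(0) ≠ 0, b(1) ≠ 0, and deg b ≥ 1, and let μ₁, μ₂ be complex numbers. Define the polynomial f(z) := −(1+μ₁)·(z−1)·a(z)·b(z) − (1+μ₂)·z·a(z)·b(z) + z·(z−1)·(a'(z)·b(z) − a(z)·b'(z)), where a' and b' denote the derivatives of a and b. Then b(z) does not divide f(z) in the polynomial ring ℂ[z]. -/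
open Polynomial

theorem not_dvd_f (a b : Polynomial ℂ) (hab : IsCoprime a b)
    (hb0 : b.eval 0 ≠ 0) (hb1 : b.eval 1 ≠ 0) (hdeg : 1 ≤ b.natDegree)
    (μ₁ μ₂ : ℂ) :
    ¬ b ∣ (-(C (1 + μ₁)) * ((X - 1) * a * b) - C (1 + μ₂) * (X * a * b) +
        X * (X - 1) * (derivative a * b - a * derivative b)) := by
  intro h
  have key : ∀ c : ℂ, b.eval c ≠ 0 → IsCoprime b (X - C c) := by
    intro c hc
    apply IsCoprime.symm
    rw [(irreducible_X_sub_C c).coprime_iff_not_dvd, dvd_iff_isRoot]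
    exact hc
  have h0 : IsCoprime b X := by simpa using key 0 hb0
  have h1 : IsCoprime b (X - 1) := by simpa using key 1 hb1
  have h2 : b ∣ (X * (X - 1) * a) * derivative b := by
    have h3 : b ∣ b * (-(C (1 + μ₁)) * ((X - 1) * a) - C (1 + μ₂) * (X * a) +
        X * (X - 1) * derivative a) := dvd_mul_right _ _
    have h4 := dvd_sub h3 h
    convert h4 using 1
    ring
  have h5 : b ∣ derivative b :=
    ((h0.mul_right h1).mul_right hab.symm).dvd_of_dvd_mul_left h2
  have h6 : derivative b ≠ 0 := by
    intro h
    have := natDegree_eq_zero_of_derivative_eq_zero h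
    omega
  have h7 := natDegree_le_of_dvd h5 h6
  have h8 := natDegree_derivative_lt (p := b) (by omega)
  omega
end
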